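/- Let k ∈ ℤ^d lie in the first octant with |k|_∞ ≥ 1, let 1 ≤ γ₁ ≤ γ ≤ ∞, and suppose supp 𝓕_x f(t,·) ⊂ k+[0,1)^d for all t > 0. Then ‖∫₀^t e^{(t−τ)Δ} f(τ) dτ‖_{L^γ_t L²_x((0,∞)×ℝ^d)} ≤ C |k|^{−2/γ − 2/γ₁'} ‖f‖_{L^{γ₁}_t L²_x}, where 1/γ₁ + 1/γ₁' = 1 (i.e. the gain is |k|^{−2(1/γ + 1 − 1/γ₁)}). -/

import Mathlib

open MeasureTheory FourierTransform ENNReal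

noncomputable section

abbrev Vd (d : ℕ) := EuclideanSpace ℝ (Fin d)

def cube (d : ℕ) (k : Fin d → ℤ) : Set (Vd d) :=
  {ξ | ∀ i, (k i : ℝ) ≤ ξ i ∧ ξ i < k i + 1}

def toV {d : ℕ} (k : Fin d → ℤ) : Vd d :=
  (WithLp.equiv 2 (Fin d → ℝ)).symm fun i => (k i : ℝ)

/-- The heat semigroup e^{tΔ} = 𝓕⁻¹ e^{−t|ξ|²} 𝓕. -/
def heat (d : ℕ) (t : ℝ) (f : Vd d → ℂ) : Vd d → ℂ :=
  𝓕⁻ (fun ξ => (Real.exp (-(t * ‖ξ‖ ^ 2)) : ℂ) * 𝓕 f ξ)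

/-- The Duhamel term ∫₀^t e^{(t−τ)Δ} f(τ) dτ. -/
def duhamel (d : ℕ) (f : ℝ → Vd d → ℂ) (t : ℝ) : Vd d → ℂ :=
  fun x => ∫ τ in Set.Ioc (0:ℝ) t, heat d (t - τ) (f τ) x

/-- The L^γ norm in time on (0,∞) of a nonnegative extended-real quantity,
for γ ∈ [1,∞]. -/
def timeNorm (γ : ℝ≥0∞) (F : ℝ → ℝ≥0∞) : ℝ≥0∞ :=
  if γ = ∞ then essSup F (volume.restrict (Set.Ioi (0:ℝ)))
  else (∫⁻ t in Set.Ioi (0:ℝ), F t ^ γ.toReal) ^ (1 / γ.toReal)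

/-!
By Plancherel, `e^{sΔ}` contracts `L²` functions whose Fourier transform is supported in `|ξ| ≥ R`
by the factor `e^{-sR²}`; the cube `k + [0,1)^d` in the first octant lies in `|ξ| ≥ |k|`.
Minkowski's inequality moves the `L²` norm inside the time integral, so the `L²` norm of the Duhamel
term at time `t` is at most the convolution of `‖f(τ)‖_{L²}` with `e^{-sR²} 1_{s ≥ 0}`. This kernel
has `L^r` norm at most `R^{-2/r}`, and Young's inequality with `1/r = 1/γ + 1 - 1/γ₁` concludes.
-/

section Holder

variable {α : Type*} [MeasurableSpace α] {μ : Measure α} {f g : α → ℝ≥0∞}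

theorem eLpNorm_eq_lintegral_rpow {p : ℝ≥0∞} (hp₀ : p ≠ 0) (hp : p ≠ ∞) (f : α → ℝ≥0∞) :
    eLpNorm f p μ = (∫⁻ x, f x ^ p.toReal ∂μ) ^ (1 / p.toReal) := by
  simp only [eLpNorm_eq_lintegral_rpow_enorm_toReal hp₀ hp, enorm_eq_self]

theorem lintegral_mul_le_lintegral_mul_eLpNorm_top (hf : AEMeasurable f μ) :
    ∫⁻ x, f x * g x ∂μ ≤ (∫⁻ x, f x ∂μ) * eLpNorm g ∞ μ := by
  have hg : ∀ᵐ x ∂μ, g x ≤ eLpNorm g ∞ μ := by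
    simpa only [eLpNorm_exponent_top, enorm_eq_self] using ae_le_eLpNormEssSup (f := g)
  calc ∫⁻ x, f x * g x ∂μ
      ≤ ∫⁻ x, f x * eLpNorm g ∞ μ ∂μ :=
        lintegral_mono_ae (hg.mono fun x hx => mul_le_mul_right hx _)
    _ = (∫⁻ x, f x ∂μ) * eLpNorm g ∞ μ := lintegral_mul_const'' _ hf

theorem lintegral_mul_le_eLpNorm_mul_eLpNorm {p q : ℝ≥0∞} [hpq : p.HolderConjugate q]
    (hf : AEMeasurable f μ) (hg : AEMeasurable g μ) :
    ∫⁻ x, f x * g x ∂μ ≤ eLpNorm f p μ * eLpNorm g q μ := by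
  have hp₁ : 1 ≤ p := HolderConjugate.one_le p q
  rcases hp₁.eq_or_lt with rfl | hp
  · obtain rfl : q = ∞ := (HolderConjugate.eq_top_iff_eq_one q 1).2 rfl
    simpa only [eLpNorm_one_eq_lintegral_enorm, enorm_eq_self] using
      lintegral_mul_le_lintegral_mul_eLpNorm_top hf
  rcases eq_or_ne p ∞ with rfl | hp_top
  · obtain rfl : q = 1 := (HolderConjugate.eq_top_iff_eq_one ∞ q).1 rfl
    simpa only [eLpNorm_one_eq_lintegral_enorm, enorm_eq_self, mul_comm] using
      lintegral_mul_le_lintegral_mul_eLpNorm_top (g := f) hg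
  have hq_top : q ≠ ∞ := (HolderConjugate.ne_top_iff_ne_one q p).2 hp.ne'
  rw [eLpNorm_eq_lintegral_rpow (HolderConjugate.ne_zero p q) hp_top,
    eLpNorm_eq_lintegral_rpow (HolderConjugate.ne_zero q p) hq_top]
  refine ENNReal.lintegral_mul_le_Lp_mul_Lq μ (HolderConjugate.toReal ?_) hf hg
  simpa only [toReal_one] using toReal_strict_mono hp_top hp

end Holder

section Young

variable {G : Type*} [AddGroup G] [MeasurableSpace G] [MeasurableAdd₂ G] [MeasurableNeg G]
  {μ : Measure G} [μ.IsAddLeftInvariant] {f g : G → ℝ≥0∞}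

theorem lintegral_lconvolution [SFinite μ] (hf : AEMeasurable f μ) (hg : AEMeasurable g μ) :
    ∫⁻ x, (f ⋆ₗ[μ] g) x ∂μ = (∫⁻ x, f x ∂μ) * ∫⁻ x, g x ∂μ := by
  have hg_add (y : G) : AEMeasurable (fun x => g (-y + x)) μ :=
    hg.comp_quasiMeasurePreserving (measurePreserving_add_left μ (-y)).quasiMeasurePreserving
  simp only [lconvolution_def]
  rw [lintegral_lintegral_swap (by fun_prop)]
  simp only [lintegral_const_mul'' _ (hg_add _), lintegral_add_left_eq_self,
    lintegral_mul_const'' _ hf]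

variable [μ.IsNegInvariant]

theorem measurePreserving_neg_add (x : G) : MeasurePreserving (fun y => -y + x) μ μ := by
  simpa only [Function.comp_def, neg_add_rev, neg_neg] using
    (Measure.measurePreserving_neg μ).comp (measurePreserving_add_left μ (-x))

theorem lintegral_neg_add_eq_self (f : G → ℝ≥0∞) (x : G) :
    ∫⁻ y, f (-y + x) ∂μ = ∫⁻ y, f y ∂μ := by
  rw [← lintegral_neg_eq_self f, ← lintegral_add_left_eq_self (fun y => f (-y)) (-x)]
  simp only [neg_add_rev, neg_neg]

variable [SFinite μ]

theorem lconvolution_le_rpow_mul {p q r : ℝ} (hp : 1 ≤ p) (hr : 1 ≤ r) (hq : 0 < q)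
    (h : p⁻¹ + r⁻¹ = 1 + q⁻¹) (hf : AEMeasurable f μ) (hg : AEMeasurable g μ) (x : G) :
    (f ⋆ₗ[μ] g) x ≤ ((fun y => f y ^ p) ⋆ₗ[μ] (fun y => g y ^ r)) x ^ q⁻¹ *
      ((∫⁻ y, f y ^ p ∂μ) ^ (1 - r⁻¹) * (∫⁻ y, g y ^ r ∂μ) ^ (1 - p⁻¹)) := by
  have hp₁ : 0 ≤ 1 - p⁻¹ := sub_nonneg.2 (inv_le_one_of_one_le₀ hp)
  have hr₁ : 0 ≤ 1 - r⁻¹ := sub_nonneg.2 (inv_le_one_of_one_le₀ hr)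
  have hq₀ : 0 ≤ q⁻¹ := inv_nonneg.2 hq.le
  -- Hölder with exponents `q`, `(1 - r⁻¹)⁻¹`, `(1 - p⁻¹)⁻¹`, applied to this splitting of `f * g`.
  have factor (a b : ℝ≥0∞) :
      a * b = (a ^ p * b ^ r) ^ q⁻¹ * ((a ^ p) ^ (1 - r⁻¹) * (b ^ r) ^ (1 - p⁻¹)) := by
    have ha : (a ^ p) ^ q⁻¹ * (a ^ p) ^ (1 - r⁻¹) = a := by
      rw [← rpow_add_of_nonneg _ _ hq₀ hr₁, show q⁻¹ + (1 - r⁻¹) = p⁻¹ by linarith,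
        rpow_rpow_inv (by positivity)]
    have hb : (b ^ r) ^ q⁻¹ * (b ^ r) ^ (1 - p⁻¹) = b := by
      rw [← rpow_add_of_nonneg _ _ hq₀ hp₁, show q⁻¹ + (1 - p⁻¹) = r⁻¹ by linarith,
        rpow_rpow_inv (by positivity)]
    rw [mul_rpow_of_nonneg _ _ hq₀, mul_mul_mul_comm, ha, hb]
  have holder := lintegral_mul_prod_norm_pow_le (μ := μ) Finset.univ
    (g := fun y => f y ^ p * g (-y + x) ^ r)
    (f := ![fun y => f y ^ p, fun y => g (-y + x) ^ r]) (p := ![1 - r⁻¹, 1 - p⁻¹]) (by fun_prop)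
    (by simpa [Fin.forall_fin_two] using ⟨by fun_prop, by fun_prop⟩) q⁻¹
    (by simpa using by linarith) hq₀
    (by simpa only [Finset.mem_univ, forall_const, Fin.forall_fin_two] using ⟨hr₁, hp₁⟩)
  simpa only [Fin.prod_univ_two, Matrix.cons_val_zero, Matrix.cons_val_one, ← factor,
    lintegral_neg_add_eq_self (fun y => g y ^ r), lconvolution_def] using holder

theorem lintegral_lconvolution_rpow_le {p q r : ℝ} (hp : 1 ≤ p) (hr : 1 ≤ r) (hq : 0 < q)
    (h : p⁻¹ + r⁻¹ = 1 + q⁻¹) (hf : AEMeasurable f μ) (hg : AEMeasurable g μ) :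
    ∫⁻ x, (f ⋆ₗ[μ] g) x ^ q ∂μ ≤
      ((∫⁻ x, f x ^ p ∂μ) ^ p⁻¹ * (∫⁻ x, g x ^ r ∂μ) ^ r⁻¹) ^ q := by
  set A := ∫⁻ x, f x ^ p ∂μ
  set B := ∫⁻ x, g x ^ r ∂μ
  have hp₁ : 0 ≤ 1 - p⁻¹ := sub_nonneg.2 (inv_le_one_of_one_le₀ hp)
  have hr₁ : 0 ≤ 1 - r⁻¹ := sub_nonneg.2 (inv_le_one_of_one_le₀ hr)
  have hq₀ : 0 ≤ q⁻¹ := inv_nonneg.2 hq.le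
  have hA : A ^ q⁻¹ * A ^ (1 - r⁻¹) = A ^ p⁻¹ := by
    rw [← rpow_add_of_nonneg _ _ hq₀ hr₁]; congr 1; linarith
  have hB : B ^ q⁻¹ * B ^ (1 - p⁻¹) = B ^ r⁻¹ := by
    rw [← rpow_add_of_nonneg _ _ hq₀ hp₁]; congr 1; linarith
  calc ∫⁻ x, (f ⋆ₗ[μ] g) x ^ q ∂μ
      ≤ ∫⁻ x, ((fun y => f y ^ p) ⋆ₗ[μ] (fun y => g y ^ r)) x *
          (A ^ (1 - r⁻¹) * B ^ (1 - p⁻¹)) ^ q ∂μ := by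
        refine lintegral_mono fun x => ?_
        refine (rpow_le_rpow (lconvolution_le_rpow_mul hp hr hq h hf hg x) hq.le).trans_eq ?_
        rw [mul_rpow_of_nonneg _ _ hq.le, rpow_inv_rpow hq.ne']
    _ = A * B * (A ^ (1 - r⁻¹) * B ^ (1 - p⁻¹)) ^ q := by
        rw [lintegral_mul_const'' _ (aemeasurable_lconvolution (by fun_prop) (by fun_prop)),
          lintegral_lconvolution (by fun_prop) (by fun_prop)]
    _ = (A ^ p⁻¹ * B ^ r⁻¹) ^ q := by
        rw [← hA, ← hB, mul_mul_mul_comm, ← mul_rpow_of_nonneg _ _ hq₀,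
          mul_rpow_of_nonneg ((A * B) ^ q⁻¹) _ hq.le, rpow_inv_rpow hq.ne']

theorem eLpNorm_lconvolution_top_le {p r : ℝ≥0∞} [p.HolderConjugate r]
    (hf : AEMeasurable f μ) (hg : AEMeasurable g μ) :
    eLpNorm (f ⋆ₗ[μ] g) ∞ μ ≤ eLpNorm f p μ * eLpNorm g r μ := by
  rw [eLpNorm_exponent_top]
  refine essSup_le_of_ae_le _ (.of_forall fun x => ?_)
  rw [← eLpNorm_comp_measurePreserving hg.aestronglyMeasurable (measurePreserving_neg_add x)]
  exact lintegral_mul_le_eLpNorm_mul_eLpNorm hf (by fun_prop)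

theorem eLpNorm_lconvolution_le {p q r : ℝ≥0∞} (hp : 1 ≤ p) (hr : 1 ≤ r)
    (h : p⁻¹ + r⁻¹ = 1 + q⁻¹) (hf : AEMeasurable f μ) (hg : AEMeasurable g μ) :
    eLpNorm (f ⋆ₗ[μ] g) q μ ≤ eLpNorm f p μ * eLpNorm g r μ := by
  rcases eq_or_ne q ∞ with rfl | hq_top
  · have : p.HolderConjugate r := holderConjugate_iff.2 (by simpa only [inv_top, add_zero] using h)
    exact eLpNorm_lconvolution_top_le hf hg
  have hp₀ : p ≠ 0 := (one_pos.trans_le hp).ne'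
  have hr₀ : r ≠ 0 := (one_pos.trans_le hr).ne'
  have hq₀ : q ≠ 0 := by
    rintro rfl
    simp [hp₀, hr₀] at h
  have ne_top {s t : ℝ≥0∞} (hs : 1 ≤ s) (hst : s⁻¹ + t⁻¹ = 1 + q⁻¹) : t ≠ ∞ := by
    rintro rfl
    have : 1 + q⁻¹ ≤ 1 := by simpa [← hst] using hs
    exact this.not_gt (lt_add_right one_ne_top (ENNReal.inv_ne_zero.2 hq_top))
  have hp_top : p ≠ ∞ := ne_top hr (by rwa [add_comm])
  have hr_top : r ≠ ∞ := ne_top hp h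
  have h_real : p.toReal⁻¹ + r.toReal⁻¹ = 1 + q.toReal⁻¹ := by
    simpa only [toReal_add, ne_eq, inv_eq_top, hp₀, hr₀, hq₀, not_false_eq_true, one_ne_top,
      toReal_inv, toReal_one] using congrArg ENNReal.toReal h
  have hq_pos : 0 < q.toReal := toReal_pos hq₀ hq_top
  rw [eLpNorm_eq_lintegral_rpow hp₀ hp_top, eLpNorm_eq_lintegral_rpow hr₀ hr_top,
    eLpNorm_eq_lintegral_rpow hq₀ hq_top]
  simp only [one_div]
  rw [rpow_inv_le_iff hq_pos]
  exact lintegral_lconvolution_rpow_le (by simpa using toReal_mono hp_top hp)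
    (by simpa using toReal_mono hr_top hr) hq_pos h_real hf hg

end Young

theorem eLpNorm_le_lintegral_rpow_of_le_one {α : Type*} [MeasurableSpace α] {μ : Measure α}
    {f : α → ℝ≥0∞} (hf : ∀ x, f x ≤ 1) {p : ℝ≥0∞} (hp : 1 ≤ p) :
    eLpNorm f p μ ≤ (∫⁻ x, f x ∂μ) ^ (p⁻¹).toReal := by
  rcases eq_or_ne p ∞ with rfl | hp_top
  · simpa [eLpNormEssSup] using essSup_le_of_ae_le 1 (.of_forall hf)
  rw [eLpNorm_eq_lintegral_rpow (one_pos.trans_le hp).ne' hp_top, toReal_inv, one_div]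
  gcongr with x
  exact (rpow_le_rpow_of_exponent_ge (hf x) (toReal_mono hp_top hp)).trans_eq (by simp)

section ExpDecay

/-- The causal kernel `s ↦ e^{-sK} 1_{s ≥ 0}`, which acts on functions of time by convolution. -/
def expDecay (K : ℝ) : ℝ → ℝ≥0∞ :=
  (Set.Ici 0).indicator fun s => ENNReal.ofReal (Real.exp (-(s * K)))

variable {K : ℝ}

theorem measurable_expDecay (K : ℝ) : Measurable (expDecay K) :=
  Measurable.indicator (by fun_prop) measurableSet_Ici

theorem expDecay_le_one (hK : 0 ≤ K) (s : ℝ) : expDecay K s ≤ 1 :=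
  Set.indicator_apply_le' (fun hs => by simpa using mul_nonneg hs hK) fun _ => zero_le_one

theorem lintegral_expDecay (hK : 0 < K) : ∫⁻ s, expDecay K s = (ENNReal.ofReal K)⁻¹ := by
  have h_exp : (fun s : ℝ => Real.exp (-(s * K))) = fun s => Real.exp (-K * s) := by
    ext s; rw [neg_mul, mul_comm]
  have h_int : IntegrableOn (fun s : ℝ => Real.exp (-(s * K))) (Set.Ioi 0) :=
    h_exp ▸ integrableOn_exp_mul_Ioi (neg_neg_of_pos hK) 0
  rw [expDecay, lintegral_indicator measurableSet_Ici, ← restrict_Ioi_eq_restrict_Ici,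
    ← ofReal_integral_eq_lintegral_ofReal h_int (.of_forall fun s => (Real.exp_pos _).le), h_exp,
    integral_exp_mul_Ioi (neg_neg_of_pos hK), ← ENNReal.ofReal_inv_of_pos hK]
  simp

theorem eLpNorm_expDecay_le (hK : 0 < K) {p : ℝ≥0∞} (hp : 1 ≤ p) :
    eLpNorm (expDecay K) p volume ≤ (ENNReal.ofReal K)⁻¹ ^ (p⁻¹).toReal :=
  lintegral_expDecay hK ▸ eLpNorm_le_lintegral_rpow_of_le_one (expDecay_le_one hK.le) hp

theorem lconvolution_expDecay (K : ℝ) (g : ℝ → ℝ≥0∞) (t : ℝ) :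
    ((Set.Ioi 0).indicator g ⋆ₗ expDecay K) t =
      ∫⁻ τ in Set.Ioc 0 t, ENNReal.ofReal (Real.exp (-((t - τ) * K))) * g τ := by
  rw [lconvolution_def, ← lintegral_indicator measurableSet_Ioc]
  refine lintegral_congr fun τ => ?_
  by_cases h₀ : 0 < τ <;> by_cases ht : τ ≤ t <;>
    simp [expDecay, Set.indicator, h₀, ht, mul_comm, ← sub_eq_neg_add]

end ExpDecay

section TimeNorm

variable {γ γ₁ : ℝ≥0∞}

theorem timeNorm_eq_eLpNorm (hγ : γ ≠ 0) (F : ℝ → ℝ≥0∞) :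
    timeNorm γ F = eLpNorm F γ (volume.restrict (Set.Ioi 0)) := by
  rw [timeNorm]
  split_ifs with h
  · simp only [h, eLpNorm_exponent_top, eLpNormEssSup, enorm_eq_self]
  · rw [eLpNorm_eq_lintegral_rpow hγ h]

theorem timeNorm_mono (γ : ℝ≥0∞) {F G : ℝ → ℝ≥0∞} (h : ∀ t, 0 < t → F t ≤ G t) :
    timeNorm γ F ≤ timeNorm γ G := by
  have h_ae : ∀ᵐ t ∂volume.restrict (Set.Ioi (0 : ℝ)), F t ≤ G t :=
    ae_restrict_of_forall_mem measurableSet_Ioi h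
  unfold timeNorm
  split_ifs
  · exact essSup_mono_ae h_ae
  · refine rpow_le_rpow (lintegral_mono_ae ?_) (by positivity)
    exact h_ae.mono fun t ht => rpow_le_rpow ht toReal_nonneg

theorem exists_young_exponent (h1 : 1 ≤ γ₁) (h2 : γ₁ ≤ γ) :
    ∃ r : ℝ≥0∞, 1 ≤ r ∧ γ₁⁻¹ + r⁻¹ = 1 + γ⁻¹ ∧
      (r⁻¹).toReal = (γ⁻¹).toReal + 1 - (γ₁⁻¹).toReal := by
  have hγ₁ : γ₁⁻¹ ≤ 1 := ENNReal.inv_le_one.2 h1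
  have hγ : γ⁻¹ ≤ γ₁⁻¹ := ENNReal.inv_le_inv.2 h2
  have hγ_top : γ⁻¹ ≠ ∞ := ((hγ.trans hγ₁).trans_lt one_lt_top).ne
  have hγ₁_le : γ₁⁻¹ ≤ 1 + γ⁻¹ := hγ₁.trans le_self_add
  refine ⟨(1 + γ⁻¹ - γ₁⁻¹)⁻¹, ?_, ?_, ?_⟩
  · rw [ENNReal.one_le_inv, tsub_le_iff_right]
    gcongr
  · rw [inv_inv, add_tsub_cancel_of_le hγ₁_le]
  · rw [inv_inv, toReal_sub_of_le hγ₁_le (add_ne_top.2 ⟨one_ne_top, hγ_top⟩),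
      toReal_add one_ne_top hγ_top, toReal_one, add_comm]

theorem timeNorm_exp_lintegral_le_of_measurable (h1 : 1 ≤ γ₁) (h2 : γ₁ ≤ γ) {K : ℝ} (hK : 0 < K)
    {g : ℝ → ℝ≥0∞} (hg : Measurable g) :
    timeNorm γ (fun t => ∫⁻ τ in Set.Ioc 0 t, ENNReal.ofReal (Real.exp (-((t - τ) * K))) * g τ) ≤
      (ENNReal.ofReal K)⁻¹ ^ ((γ⁻¹).toReal + 1 - (γ₁⁻¹).toReal) * timeNorm γ₁ g := by
  obtain ⟨r, hr, hr_add, hr_toReal⟩ := exists_young_exponent h1 h2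
  simp only [← lconvolution_expDecay]
  rw [timeNorm_eq_eLpNorm (one_pos.trans_le (h1.trans h2)).ne',
    timeNorm_eq_eLpNorm (one_pos.trans_le h1).ne', ← hr_toReal,
    ← eLpNorm_indicator_eq_eLpNorm_restrict (f := g) measurableSet_Ioi]
  calc eLpNorm ((Set.Ioi 0).indicator g ⋆ₗ expDecay K) γ (volume.restrict (Set.Ioi 0))
      ≤ eLpNorm ((Set.Ioi 0).indicator g ⋆ₗ expDecay K) γ volume := eLpNorm_restrict_le ..
    _ ≤ eLpNorm ((Set.Ioi 0).indicator g) γ₁ volume * eLpNorm (expDecay K) r volume :=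
      eLpNorm_lconvolution_le h1 hr hr_add (hg.indicator measurableSet_Ioi).aemeasurable
        (measurable_expDecay K).aemeasurable
    _ ≤ (ENNReal.ofReal K)⁻¹ ^ (r⁻¹).toReal * eLpNorm ((Set.Ioi 0).indicator g) γ₁ volume := by
      rw [mul_comm]
      gcongr
      exact eLpNorm_expDecay_le hK hr

theorem exists_measurable_le_setLIntegral_mul_eq {α : Type*} [MeasurableSpace α] {μ : Measure α}
    [SFinite μ] {w : α → ℝ≥0∞} (hw : Measurable w) (hw_top : ∀ x, w x ≠ ∞) (F : α → ℝ≥0∞) :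
    ∃ g, Measurable g ∧ g ≤ F ∧
      ∀ s, MeasurableSet s → ∫⁻ x in s, w x * F x ∂μ = ∫⁻ x in s, w x * g x ∂μ := by
  obtain ⟨g, hg, hgF, h_eq⟩ := exists_measurable_le_forall_setLIntegral_eq (μ := μ.withDensity w) F
  refine ⟨g, hg, hgF, fun s hs => ?_⟩
  have h_density (φ : α → ℝ≥0∞) : ∫⁻ x in s, φ x ∂μ.withDensity w = ∫⁻ x in s, w x * φ x ∂μ := by
    rw [setLIntegral_withDensity_eq_setLIntegral_mul_non_measurable μ hw φ hs
      (.of_forall fun x => (hw_top x).lt_top)]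
    rfl
  simp only [← h_density, h_eq]

theorem timeNorm_exp_lintegral_le (h1 : 1 ≤ γ₁) (h2 : γ₁ ≤ γ) {K : ℝ} (hK : 0 < K)
    (F : ℝ → ℝ≥0∞) :
    timeNorm γ (fun t => ∫⁻ τ in Set.Ioc 0 t, ENNReal.ofReal (Real.exp (-((t - τ) * K))) * F τ) ≤
      (ENNReal.ofReal K)⁻¹ ^ ((γ⁻¹).toReal + 1 - (γ₁⁻¹).toReal) * timeNorm γ₁ F := by
  -- `F` need not be measurable, so Young's inequality is applied to a measurable minorant which
  -- has the same weighted integrals; writing `e^{-(t-τ)K} = e^{-tK} e^{τK}` makes the weight, hence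
  -- the minorant, independent of `t`.
  obtain ⟨g, hg, hgF, h_eq⟩ := exists_measurable_le_setLIntegral_mul_eq (μ := volume)
    (w := fun τ => ENNReal.ofReal (Real.exp (τ * K))) (by fun_prop) (fun _ => ofReal_ne_top) F
  have h_exp (φ : ℝ → ℝ≥0∞) (t : ℝ) :
      ∫⁻ τ in Set.Ioc 0 t, ENNReal.ofReal (Real.exp (-((t - τ) * K))) * φ τ =
        ENNReal.ofReal (Real.exp (-(t * K))) *
          ∫⁻ τ in Set.Ioc 0 t, ENNReal.ofReal (Real.exp (τ * K)) * φ τ := by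
    rw [← lintegral_const_mul' _ _ ofReal_ne_top]
    refine lintegral_congr fun τ => ?_
    rw [← mul_assoc, ← ENNReal.ofReal_mul (Real.exp_pos _).le, ← Real.exp_add]
    ring_nf
  calc _ = timeNorm γ fun t =>
        ∫⁻ τ in Set.Ioc 0 t, ENNReal.ofReal (Real.exp (-((t - τ) * K))) * g τ := by
        simp only [h_exp, h_eq _ measurableSet_Ioc]
    _ ≤ (ENNReal.ofReal K)⁻¹ ^ ((γ⁻¹).toReal + 1 - (γ₁⁻¹).toReal) * timeNorm γ₁ g :=
      timeNorm_exp_lintegral_le_of_measurable h1 h2 hK hg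
    _ ≤ _ := by gcongr; exact timeNorm_mono γ₁ fun t _ => hgF t

end TimeNorm

section Minkowski

theorem eLpNorm_two_lintegral_le {X T : Type*} [MeasurableSpace X] [MeasurableSpace T]
    {ν : Measure X} {μ : Measure T} [SFinite ν] [SFinite μ] {w : X → T → ℝ≥0∞}
    (hw : Measurable (Function.uncurry w)) :
    eLpNorm (fun x => ∫⁻ τ, w x τ ∂μ) 2 ν ≤ ∫⁻ τ, eLpNorm (fun x => w x τ) 2 ν ∂μ := by
  have eLpNorm_two (φ : X → ℝ≥0∞) : eLpNorm φ 2 ν = (∫⁻ x, φ x ^ 2 ∂ν) ^ (2⁻¹ : ℝ) := by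
    simp [eLpNorm_eq_lintegral_rpow]
  have hw_left (x : X) : Measurable (w x) := hw.of_uncurry_left
  have hw_right (τ : T) : Measurable fun x => w x τ := hw.of_uncurry_right
  have hN : Measurable fun τ => eLpNorm (fun x => w x τ) 2 ν := by
    simp only [eLpNorm_two]
    exact (Measurable.lintegral_prod_left' (hw.pow_const 2)).pow_const _
  rw [eLpNorm_two, rpow_inv_le_iff two_pos, rpow_two]
  calc ∫⁻ x, (∫⁻ τ, w x τ ∂μ) ^ 2 ∂ν
      = ∫⁻ x, ∫⁻ z, w x z.1 * w x z.2 ∂μ.prod μ ∂ν := by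
        refine lintegral_congr fun x => ?_
        rw [lintegral_prod_mul (hw_left x).aemeasurable (hw_left x).aemeasurable, sq]
    _ = ∫⁻ z, ∫⁻ x, w x z.1 * w x z.2 ∂ν ∂μ.prod μ := by
        refine lintegral_lintegral_swap (Measurable.aemeasurable ?_)
        exact (hw.comp (measurable_fst.prodMk measurable_snd.fst)).mul
          (hw.comp (measurable_fst.prodMk measurable_snd.snd))
    _ ≤ ∫⁻ z, eLpNorm (fun x => w x z.1) 2 ν * eLpNorm (fun x => w x z.2) 2 ν ∂μ.prod μ :=
        lintegral_mono fun z => lintegral_mul_le_eLpNorm_mul_eLpNorm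
          (hw_right z.1).aemeasurable (hw_right z.2).aemeasurable
    _ = (∫⁻ τ, eLpNorm (fun x => w x τ) 2 ν ∂μ) ^ 2 := by
        rw [lintegral_prod_mul hN.aemeasurable hN.aemeasurable, sq]

theorem isClosed_setOf_aestronglyMeasurable {X T E : Type*} [TopologicalSpace X]
    [FrechetUrysohnSpace X] [MeasurableSpace T] {μ : Measure T} [TopologicalSpace E]
    [TopologicalSpace.PseudoMetrizableSpace E] {h : T → X → E} (hh : ∀ τ, Continuous (h τ)) :
    IsClosed {x | AEStronglyMeasurable (fun τ => h τ x) μ} := by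
  refine isClosed_of_closure_subset fun x hx => ?_
  obtain ⟨y, hy, hyx⟩ := mem_closure_iff_seq_limit.1 hx
  exact aestronglyMeasurable_of_tendsto_ae Filter.atTop hy
    (.of_forall fun τ => ((hh τ).tendsto x).comp hyx)

variable {X T E : Type*} [TopologicalSpace X] [SecondCountableTopology X]
  [TopologicalSpace.MetrizableSpace X] [MeasurableSpace X] [OpensMeasurableSpace X]
  [MeasurableSpace T] {μ : Measure T} [NormedAddCommGroup E] {h : T → X → E}

theorem exists_stronglyMeasurable_uncurry_ae_eq (hh : ∀ τ, Continuous (h τ))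
    (hμ : ∀ x, AEStronglyMeasurable (fun τ => h τ x) μ) :
    ∃ v : X → T → E, StronglyMeasurable (Function.uncurry v) ∧ ∀ᵐ τ ∂μ, ∀ x, v x τ = h τ x := by
  obtain ⟨D, hD, hD_dense⟩ := TopologicalSpace.exists_countable_dense X
  have h_mk : ∀ᵐ τ ∂μ, ∀ x ∈ D, h τ x = (hμ x).mk _ τ :=
    (ae_ball_iff hD).2 fun x _ => (hμ x).ae_eq_mk
  obtain ⟨N, hN_sub, hN, hN_null⟩ := exists_measurable_superset_of_null (ae_iff.1 h_mk)
  -- A single null set, found from a countable dense set, serves all `x` by continuity.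
  let v (x : X) : T → E := Nᶜ.indicator fun τ => h τ x
  have hv_cont (τ : T) : Continuous fun x => v x τ := by
    by_cases hτ : τ ∈ N
    · simpa only [v, Set.indicator_of_notMem (Set.notMem_compl_iff.2 hτ)] using continuous_const
    · simpa only [v, Set.indicator_of_mem (Set.mem_compl hτ)] using hh τ
  have hv_dense (x : X) (hx : x ∈ D) : StronglyMeasurable (v x) := by
    have : v x = Nᶜ.indicator ((hμ x).mk _) :=
      Set.indicator_congr fun τ hτ => of_not_not (mt (@hN_sub τ) hτ) x hx
    exact this ▸ (hμ x).stronglyMeasurable_mk.indicator hN.compl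
  have hv (x : X) : StronglyMeasurable (v x) := by
    obtain ⟨y, hy, hyx⟩ := mem_closure_iff_seq_limit.1 (hD_dense x)
    exact stronglyMeasurable_of_tendsto Filter.atTop (fun n => hv_dense (y n) (hy n))
      (tendsto_pi_nhds.2 fun τ => ((hv_cont τ).tendsto x).comp hyx)
  refine ⟨v, stronglyMeasurable_uncurry_of_continuous_of_stronglyMeasurable hv_cont hv, ?_⟩
  filter_upwards [compl_mem_ae_iff.2 hN_null] with τ hτ x
  exact Set.indicator_of_mem hτ _

theorem exists_stronglyMeasurable_uncurry_ae_eq_indicator (hh : ∀ τ, Continuous (h τ)) :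
    ∃ v : X → T → E, StronglyMeasurable (Function.uncurry v) ∧
      ∀ᵐ τ ∂μ, ∀ x, v x τ = {x | AEStronglyMeasurable (fun τ => h τ x) μ}.indicator (h τ) x := by
  set M := {x | AEStronglyMeasurable (fun τ => h τ x) μ}
  have hM : MeasurableSet M := (isClosed_setOf_aestronglyMeasurable hh).measurableSet
  obtain ⟨v, hv, hv_eq⟩ := exists_stronglyMeasurable_uncurry_ae_eq (X := M) (μ := μ)
    (h := fun τ x => h τ x) (fun τ => (hh τ).comp continuous_subtype_val) fun x => x.2
  have h_emb : MeasurableEmbedding (Prod.map Subtype.val id : M × T → X × T) :=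
    (MeasurableEmbedding.subtype_coe hM).prodMap .id
  refine ⟨Function.curry (Function.extend (Prod.map Subtype.val id) (Function.uncurry v) 0),
    h_emb.stronglyMeasurable_extend hv stronglyMeasurable_zero, ?_⟩
  filter_upwards [hv_eq] with τ hτ x
  by_cases hx : x ∈ M
  · rw [Set.indicator_of_mem hx, ← hτ ⟨x, hx⟩]
    exact h_emb.injective.extend_apply _ _ (⟨x, hx⟩, τ)
  · rw [Set.indicator_of_notMem hx]
    refine Function.extend_apply' _ _ _ ?_
    rintro ⟨⟨y, _⟩, hy⟩
    obtain rfl : (y : X) = x := congrArg Prod.fst hy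
    exact hx y.2

theorem eLpNorm_two_integral_le [NormedSpace ℝ E] {ν : Measure X} [SFinite ν] [SFinite μ]
    (hh : ∀ τ, Continuous (h τ)) :
    eLpNorm (fun x => ∫ τ, h τ x ∂μ) 2 ν ≤ ∫⁻ τ, eLpNorm (h τ) 2 ν ∂μ := by
  obtain ⟨v, hv, hv_eq⟩ := exists_stronglyMeasurable_uncurry_ae_eq_indicator (μ := μ) hh
  -- Where `fun τ => h τ x` is not a.e. measurable, the Bochner integral is the junk value `0`.
  have h_integral (x : X) : ∫ τ, h τ x ∂μ = ∫ τ, v x τ ∂μ := by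
    by_cases hx : AEStronglyMeasurable (fun τ => h τ x) μ
    · exact integral_congr_ae (hv_eq.mono fun τ hτ => by simp [hτ, hx])
    · rw [integral_undef (mt Integrable.aestronglyMeasurable hx), integral_eq_zero_of_ae]
      exact hv_eq.mono fun τ hτ => by simp [hτ, hx]
  calc eLpNorm (fun x => ∫ τ, h τ x ∂μ) 2 ν
      ≤ eLpNorm (fun x => ∫⁻ τ, ‖v x τ‖ₑ ∂μ) 2 ν :=
        eLpNorm_mono_enorm fun x => h_integral x ▸ enorm_integral_le_lintegral_enorm _
    _ ≤ ∫⁻ τ, eLpNorm (fun x => ‖v x τ‖ₑ) 2 ν ∂μ := eLpNorm_two_lintegral_le hv.enorm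
    _ ≤ ∫⁻ τ, eLpNorm (h τ) 2 ν ∂μ := by
        refine lintegral_mono_ae (hv_eq.mono fun τ hτ => eLpNorm_mono_enorm fun x => ?_)
        rw [hτ, enorm_enorm]
        exact enorm_indicator_le_enorm_self _ _

end Minkowski

section Fourier

variable {V E : Type*} [NormedAddCommGroup V] [InnerProductSpace ℝ V] [FiniteDimensional ℝ V]
  [MeasurableSpace V] [BorelSpace V] [NormedAddCommGroup E] [InnerProductSpace ℂ E] {f : V → E}

theorem fourier_eq_zero_of_not_integrable (hf : ¬Integrable f) : 𝓕 f = 0 := by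
  ext w
  rw [Real.fourier_eq]
  exact integral_undef (mt (Real.fourierIntegral_convergent_iff w).1 hf)

theorem continuous_fourier (f : V → E) : Continuous (𝓕 f) := by
  by_cases hf : Integrable f
  · exact VectorFourier.fourierIntegral_continuous Real.continuous_fourierChar
      (L := innerₗ V) continuous_inner hf
  · rw [fourier_eq_zero_of_not_integrable hf]
    exact continuous_zero

theorem fourierInv_eq_fourier_comp_neg_apply (f : V → E) : 𝓕⁻ f = 𝓕 f ∘ Neg.neg :=
  funext (Real.fourierInv_eq_fourier_neg f)

theorem continuous_fourierInv (f : V → E) : Continuous (𝓕⁻ f) := by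
  rw [fourierInv_eq_fourier_comp_neg_apply]
  exact (continuous_fourier f).comp continuous_neg

variable [CompleteSpace E]

theorem coeFn_fourier_toLp_ae_eq (hf : Integrable f) (hf₂ : MemLp f 2) :
    (𝓕 (hf₂.toLp f) : Lp E 2 (volume : Measure V)) =ᵐ[volume] 𝓕 f := by
  refine ae_eq_of_integral_contDiff_smul_eq ((Lp.memLp _).locallyIntegrable one_le_two)
    (continuous_fourier f).locallyIntegrable fun g hg hg_supp => ?_
  set F : Lp E 2 (volume : Measure V) := 𝓕 (hf₂.toLp f)
  let φ : SchwartzMap V ℂ := HasCompactSupport.toSchwartzMap (f := fun x => (g x : ℂ))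
    (hg_supp.comp_left Complex.ofReal_zero) (Complex.ofRealCLM.contDiff.comp hg)
  have hφ (x : V) (v : E) : g x • v = φ x • v := (Complex.coe_smul (g x) v).symm
  have h_distribution : ∫ x, φ x • F x = ∫ ξ, 𝓕 φ ξ • hf₂.toLp f ξ := by
    simpa only [TemperedDistribution.fourier_apply, Lp.toTemperedDistribution_apply] using
      congrArg (fun T => T φ) (Lp.fourier_toTemperedDistribution_eq (hf₂.toLp f)).symm
  have h_self_adjoint : ∫ ξ, 𝓕 φ ξ • f ξ = ∫ x, φ x • 𝓕 f x := by
    simpa using! VectorFourier.integral_fourierIntegral_smul_eq_flip (L := innerₗ V)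
      Real.continuous_fourierChar continuous_inner φ.integrable hf
  calc ∫ x, g x • F x
      = ∫ x, φ x • F x := by simp only [hφ]
    _ = ∫ ξ, 𝓕 φ ξ • hf₂.toLp f ξ := h_distribution
    _ = ∫ ξ, 𝓕 φ ξ • f ξ :=
        integral_congr_ae (hf₂.coeFn_toLp.mono fun ξ hξ => congrArg (𝓕 φ ξ • ·) hξ)
    _ = ∫ x, g x • 𝓕 f x := by simp only [h_self_adjoint, hφ]

theorem eLpNorm_fourier_eq (hf : Integrable f) (hf₂ : MemLp f 2) :
    eLpNorm (𝓕 f) 2 volume = eLpNorm f 2 volume := by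
  rw [← eLpNorm_congr_ae (coeFn_fourier_toLp_ae_eq hf hf₂), ← eLpNorm_congr_ae hf₂.coeFn_toLp,
    ← Lp.enorm_def, ← Lp.enorm_def, ← ofReal_norm, ← ofReal_norm, Lp.norm_fourier_eq]

theorem eLpNorm_fourier_le (f : V → E) : eLpNorm (𝓕 f) 2 volume ≤ eLpNorm f 2 volume := by
  by_cases hf : Integrable f
  · by_cases hf₂ : eLpNorm f 2 volume = ∞
    · exact hf₂ ▸ le_top
    · exact (eLpNorm_fourier_eq hf ⟨hf.1, lt_top_iff_ne_top.2 hf₂⟩).le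
  · rw [fourier_eq_zero_of_not_integrable hf, eLpNorm_zero]
    exact zero_le

theorem eLpNorm_fourierInv_le (f : V → E) : eLpNorm (𝓕⁻ f) 2 volume ≤ eLpNorm f 2 volume := by
  rw [fourierInv_eq_fourier_comp_neg_apply, eLpNorm_comp_measurePreserving
    (continuous_fourier f).aestronglyMeasurable (Measure.measurePreserving_neg volume)]
  exact eLpNorm_fourier_le f

end Fourier

section Heat

variable {d : ℕ}

theorem continuous_heat (s : ℝ) (f : Vd d → ℂ) : Continuous (heat d s f) :=
  continuous_fourierInv _

theorem eLpNorm_heat_le {R : ℝ} (hR : 0 ≤ R) {s : ℝ} (hs : 0 ≤ s) {f : Vd d → ℂ}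
    (hf : ∀ ξ ∈ Function.support (𝓕 f), R ≤ ‖ξ‖) :
    eLpNorm (heat d s f) 2 volume ≤
      ENNReal.ofReal (Real.exp (-(s * R ^ 2))) * eLpNorm f 2 volume := by
  have h_decay (ξ : Vd d) : ‖(Real.exp (-(s * ‖ξ‖ ^ 2)) : ℂ) * 𝓕 f ξ‖ ≤
      Real.exp (-(s * R ^ 2)) * ‖𝓕 f ξ‖ := by
    by_cases hξ : 𝓕 f ξ = 0
    · simp [hξ]
    · have : R ≤ ‖ξ‖ := hf ξ hξ
      rw [norm_mul, Complex.norm_real, Real.norm_eq_abs, Real.abs_exp]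
      gcongr
  calc eLpNorm (heat d s f) 2 volume
      ≤ eLpNorm (fun ξ => (Real.exp (-(s * ‖ξ‖ ^ 2)) : ℂ) * 𝓕 f ξ) 2 volume :=
        eLpNorm_fourierInv_le _
    _ ≤ ENNReal.ofReal (Real.exp (-(s * R ^ 2))) * eLpNorm (𝓕 f) 2 volume :=
        eLpNorm_le_mul_eLpNorm_of_ae_le_mul (.of_forall h_decay) 2
    _ ≤ ENNReal.ofReal (Real.exp (-(s * R ^ 2))) * eLpNorm f 2 volume := by
        gcongr
        exact eLpNorm_fourier_le f

theorem toV_ne_zero {k : Fin d → ℤ} (hk : ∃ i, 1 ≤ k i) : toV k ≠ 0 := by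
  obtain ⟨i, hi⟩ := hk
  intro h
  have : (k i : ℝ) = 0 := congrArg (fun v : Vd d => v i) h
  have : k i = 0 := by exact_mod_cast this
  omega

theorem norm_toV_le_of_mem_cube {k : Fin d → ℤ} (hk : ∀ i, 0 ≤ k i) {ξ : Vd d}
    (hξ : ξ ∈ cube d k) : ‖toV k‖ ≤ ‖ξ‖ := by
  rw [EuclideanSpace.norm_eq, EuclideanSpace.norm_eq]
  gcongr with i
  have hk_nonneg : (0 : ℝ) ≤ k i := mod_cast hk i
  have hk_le : (k i : ℝ) ≤ ξ i := (hξ i).1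
  calc ‖toV k i‖ = k i := Real.norm_of_nonneg hk_nonneg
    _ ≤ ξ i := hk_le
    _ ≤ ‖ξ i‖ := Real.le_norm_self _

end Heat

section Duhamel

variable {d : ℕ} {R : ℝ} {f : ℝ → Vd d → ℂ}

theorem eLpNorm_duhamel_le (hR : 0 ≤ R)
    (hf : ∀ t, 0 < t → ∀ ξ ∈ Function.support (𝓕 (f t)), R ≤ ‖ξ‖) (t : ℝ) :
    eLpNorm (duhamel d f t) 2 volume ≤ ∫⁻ τ in Set.Ioc 0 t,
      ENNReal.ofReal (Real.exp (-((t - τ) * R ^ 2))) * eLpNorm (f τ) 2 volume :=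
  calc eLpNorm (duhamel d f t) 2 volume
      ≤ ∫⁻ τ in Set.Ioc 0 t, eLpNorm (heat d (t - τ) (f τ)) 2 volume :=
        eLpNorm_two_integral_le fun τ => continuous_heat (t - τ) (f τ)
    _ ≤ ∫⁻ τ in Set.Ioc 0 t,
          ENNReal.ofReal (Real.exp (-((t - τ) * R ^ 2))) * eLpNorm (f τ) 2 volume :=
        setLIntegral_mono' measurableSet_Ioc fun τ hτ =>
          eLpNorm_heat_le hR (sub_nonneg.2 hτ.2) (hf τ hτ.1)

theorem inv_ofReal_sq_rpow (hR : 0 < R) (e : ℝ) :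
    (ENNReal.ofReal (R ^ 2))⁻¹ ^ e = ENNReal.ofReal (R ^ (-(2 * e))) := by
  rw [← ENNReal.ofReal_inv_of_pos (by positivity), ENNReal.ofReal_rpow_of_pos (by positivity),
    ← Real.rpow_natCast, ← Real.rpow_neg hR.le, ← Real.rpow_mul hR.le, Nat.cast_ofNat, neg_mul]

theorem stmt6_general {γ γ₁ : ℝ≥0∞} (h1 : 1 ≤ γ₁) (h2 : γ₁ ≤ γ) (hR : 0 < R)
    (hf : ∀ t, 0 < t → ∀ ξ ∈ Function.support (𝓕 (f t)), R ≤ ‖ξ‖) :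
    timeNorm γ (fun t => eLpNorm (duhamel d f t) 2 volume) ≤
      ENNReal.ofReal (R ^ (-(2 * ((γ⁻¹).toReal + 1 - (γ₁⁻¹).toReal)))) *
        timeNorm γ₁ (fun t => eLpNorm (f t) 2 volume) :=
  calc timeNorm γ (fun t => eLpNorm (duhamel d f t) 2 volume)
      ≤ timeNorm γ (fun t => ∫⁻ τ in Set.Ioc 0 t,
          ENNReal.ofReal (Real.exp (-((t - τ) * R ^ 2))) * eLpNorm (f τ) 2 volume) :=
        timeNorm_mono γ fun t _ => eLpNorm_duhamel_le hR.le hf t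
    _ ≤ (ENNReal.ofReal (R ^ 2))⁻¹ ^ ((γ⁻¹).toReal + 1 - (γ₁⁻¹).toReal) *
          timeNorm γ₁ (fun t => eLpNorm (f t) 2 volume) :=
        timeNorm_exp_lintegral_le h1 h2 (by positivity) _
    _ = ENNReal.ofReal (R ^ (-(2 * ((γ⁻¹).toReal + 1 - (γ₁⁻¹).toReal)))) *
          timeNorm γ₁ (fun t => eLpNorm (f t) 2 volume) := by rw [inv_ofReal_sq_rpow hR]

end Duhamel

/-- for 1 ≤ γ₁ ≤ γ ≤ ∞ there is C such that for any k in the first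
octant with |k|_∞ ≥ 1 and any f with Fourier support in k+[0,1)^d for all t > 0:
‖∫₀^t e^{(t−τ)Δ} f(τ) dτ‖_{L^γ_t L²_x} ≤ C |k|^{−2(1/γ + 1 − 1/γ₁)} ‖f‖_{L^{γ₁}_t L²_x}. -/
theorem stmt6 (γ γ₁ : ℝ≥0∞) (h1 : 1 ≤ γ₁) (h2 : γ₁ ≤ γ) :
    ∃ C : ℝ, 0 < C ∧ ∀ (d : ℕ), 1 ≤ d → ∀ (k : Fin d → ℤ),
      (∀ i, 0 ≤ k i) → (∃ i, 1 ≤ k i) →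
      ∀ f : ℝ → Vd d → ℂ,
        (∀ t : ℝ, 0 < t → Function.support (𝓕 (f t)) ⊆ cube d k) →
        timeNorm γ (fun t => eLpNorm (duhamel d f t) 2 volume) ≤
          ENNReal.ofReal
              (C * ‖toV k‖ ^ (-(2 * ((γ⁻¹).toReal + 1 - (γ₁⁻¹).toReal)))) *
            timeNorm γ₁ (fun t => eLpNorm (f t) 2 volume) :=
  ⟨1, one_pos, fun _ _ _ hk hk₁ _ hf => by
    simpa only [one_mul] using stmt6_general h1 h2 (norm_pos_iff.2 (toV_ne_zero hk₁))
      fun t ht ξ hξ => norm_toV_le_of_mem_cube hk (hf t ht hξ)⟩
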